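/- Let (G,f) be an admissible pair such that G is continuous on [0, D_m(f)), G(x) > 0 for all x > 0 in its domain, and f is strictly convex at 1 (i.e. for all x₁ < 1 < x₂ and λ ∈ (0,1) with λx₁ + (1−λ)x₂ = 1, one has λf(x₁) + (1−λ)f(x₂) > 0). If (G,f) is information-subadditive, then (G,f) is divergence-subadditive. -/

import Mathlib

open scoped BigOperators

/-- A probability mass function on a finite type: nonnegative and summing to 1. -/
def IsPMF {X : Type*} [Fintype X] (p : X → ℝ) : Prop :=
  (∀ x, 0 ≤ p x) ∧ ∑ x, p x = 1

/-- Absolute continuity `p ≪ q`: `q x = 0` implies `p x = 0`. -/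
def AbsCont {X : Type*} (p q : X → ℝ) : Prop :=
  ∀ x, q x = 0 → p x = 0

/-- The f-divergence `D_f(p‖q) = ∑_{x : q(x) > 0} q(x) f(p(x)/q(x))`. -/
noncomputable def fDiv {X : Type*} [Fintype X] (f : ℝ → ℝ) (p q : X → ℝ) : ℝ :=
  ∑ x, if 0 < q x then q x * f (p x / q x) else 0

/-- `D_m(f) = f 0 + lim_{t→∞} f t / t`, as an extended real.  For a convex `f`
with `f 1 = 0` the limit equals the supremum of the slopes `f t / (t-1)` over `t > 1`. -/
noncomputable def Dm (f : ℝ → ℝ) : EReal :=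
  (f 0 : EReal) + ⨆ t : {t : ℝ // 1 < t}, ((f t.1 / (t.1 - 1) : ℝ) : EReal)

/-- An admissible pair `(G, f)`: `f` is convex on `[0,∞)` with `f 1 = 0`, and
`G : [0, D_m(f)) → [0,∞)` is non-decreasing with `G 0 = 0`. -/
def Admissible (G f : ℝ → ℝ) : Prop :=
  ConvexOn ℝ (Set.Ici 0) f ∧ f 1 = 0 ∧ G 0 = 0 ∧
    (∀ a b : ℝ, 0 ≤ a → a ≤ b → (b : EReal) < Dm f → G a ≤ G b) ∧
    (∀ a : ℝ, 0 ≤ a → (a : EReal) < Dm f → 0 ≤ G a)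

/-- The `(G,f)`-information `I_{G,f}(p_X, p_{Y|X})`: the infimum over output pmfs
`q_Y` (with `p_{Y|X=x} ≪ q_Y` for all `x`) of `∑_x p_X x • G (D_f(p_{Y|X=x}‖q_Y))`. -/
noncomputable def Igf {X Y : Type*} [Fintype X] [Fintype Y]
    (G f : ℝ → ℝ) (pX : X → ℝ) (W : X → Y → ℝ) : ℝ :=
  sInf {v : ℝ | ∃ qY : Y → ℝ, IsPMF qY ∧ (∀ x, AbsCont (W x) qY) ∧
    v = ∑ x, pX x * G (fDiv f (W x) qY)}
/-- `(G,f)` is divergence-subadditive: for all finite alphabets and pmfs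
`q_Y ≪ r_Y`, `q_Z ≪ r_Z`, one has
`G(D_f(q_Y⊗q_Z‖r_Y⊗r_Z)) ≤ G(D_f(q_Y‖r_Y)) + G(D_f(q_Z‖r_Z))`. -/
def DivSubadditive (G f : ℝ → ℝ) : Prop :=
  ∀ (Y Z : Type) [Fintype Y] [Fintype Z] (qY rY : Y → ℝ) (qZ rZ : Z → ℝ),
    IsPMF qY → IsPMF rY → IsPMF qZ → IsPMF rZ →
    AbsCont qY rY → AbsCont qZ rZ →
    G (fDiv f (fun p : Y × Z => qY p.1 * qZ p.2) (fun p : Y × Z => rY p.1 * rZ p.2)) ≤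
      G (fDiv f qY rY) + G (fDiv f qZ rZ)

/-- `(G,f)` is information-subadditive: for every pmf `p_X` and channels
`p_{Y|X}`, `p_{Z|X}` (so that `Y → X → Z` is a Markov chain),
`I_{G,f}(X;YZ) ≤ I_{G,f}(X;Y) + I_{G,f}(X;Z)`. -/
def InfoSubadditive (G f : ℝ → ℝ) : Prop :=
  ∀ (X Y Z : Type) [Fintype X] [Fintype Y] [Fintype Z]
    (pX : X → ℝ) (W : X → Y → ℝ) (V : X → Z → ℝ),
    IsPMF pX → (∀ x, IsPMF (W x)) → (∀ x, IsPMF (V x)) →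
    Igf G f pX (fun x (p : Y × Z) => W x p.1 * V x p.2) ≤
      Igf G f pX W + Igf G f pX V

lemma fDiv_eq {X : Type*} [Fintype X] (f : ℝ → ℝ) (p q : X → ℝ) (hq : ∀ x, 0 ≤ q x) :
    fDiv f p q = ∑ x, q x * f (p x / q x) := by
  unfold fDiv
  refine Finset.sum_congr rfl fun x _ => ?_
  split_ifs with h
  · rfl
  · have : q x = 0 := le_antisymm (not_lt.1 h) (hq x)
    simp [this]

lemma AbsCont.mul_div {X : Type*} {p q : X → ℝ} (h : AbsCont p q) (x : X) :
    q x * (p x / q x) = p x := by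
  by_cases hx : q x = 0
  · simp [hx, h x hx]
  · field_simp

lemma conv2 {f : ℝ → ℝ} (hf : ConvexOn ℝ (Set.Ici 0) f) {x y : ℝ} (hx : x ∈ Set.Ici (0:ℝ))
    (hy : y ∈ Set.Ici (0:ℝ)) {a b : ℝ} (ha : 0 ≤ a) (hb : 0 ≤ b) (hab : a + b = 1) :
    f (a • x + b • y) ≤ a • f x + b • f y := hf.2 hx hy ha hb hab

lemma fDiv_nonneg_aux {X : Type*} [Fintype X] {f : ℝ → ℝ} (hf : ConvexOn ℝ (Set.Ici 0) f)
    (h1 : f 1 = 0) {p q : X → ℝ} (hp : IsPMF p) (hq : IsPMF q) (h : AbsCont p q) :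
    0 ≤ fDiv f p q := by
  rw [fDiv_eq f p q hq.1]
  have := hf.map_sum_le (t := Finset.univ) (w := q) (p := fun x => p x / q x)
    (fun x _ => hq.1 x) hq.2 (fun x _ => div_nonneg (hp.1 x) (hq.1 x))
  simp only [smul_eq_mul, h.mul_div, hp.2, h1] at this
  exact this

lemma fDiv_lt_Dm {X : Type*} [Fintype X] {f : ℝ → ℝ} (hf : ConvexOn ℝ (Set.Ici 0) f)
    (hstrict : ∀ x₁ x₂ lam : ℝ, 0 ≤ x₁ → x₁ < 1 → 1 < x₂ → 0 < lam → lam < 1 →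
      lam * x₁ + (1 - lam) * x₂ = 1 → 0 < lam * f x₁ + (1 - lam) * f x₂)
    {p q : X → ℝ} (hp : IsPMF p) (hq : IsPMF q) (h : AbsCont p q) :
    (fDiv f p q : EReal) < Dm f := by
  rw [fDiv_eq f p q hq.1]
  obtain ⟨t, ht1, ht⟩ : ∃ t : ℝ, 1 < t ∧ ∀ x, p x / q x ≤ t := by
    refine ⟨2 + ∑ x, p x / q x, ?_, fun x => ?_⟩
    · have : 0 ≤ ∑ x, p x / q x := Finset.sum_nonneg fun x _ => div_nonneg (hp.1 x) (hq.1 x)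
      linarith
    · have := Finset.single_le_sum (f := fun x => p x / q x) (s := Finset.univ)
        (fun x _ => div_nonneg (hp.1 x) (hq.1 x)) (Finset.mem_univ x)
      linarith
  have ht0 : 0 < t := by linarith
  have hb : ∑ x, q x * f (p x / q x) ≤ (1 - 1/t) * f 0 + 1/t * f t := by
    have : ∀ x, q x * f (p x / q x) ≤ q x * f 0 + p x * ((f t - f 0) / t) := by
      intro x
      set s := p x / q x with hs
      have hs0 : 0 ≤ s := div_nonneg (hp.1 x) (hq.1 x)
      have hst : s / t ≤ 1 := (div_le_one ht0).2 (ht x)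
      have := conv2 hf (x := 0) (y := t) (by simp) ht0.le (a := 1 - s/t) (b := s/t) (by linarith)
        (by positivity) (by ring)
      simp only [smul_eq_mul, mul_zero, zero_add] at this
      rw [div_mul_cancel₀ _ ht0.ne'] at this
      calc q x * f s ≤ q x * ((1 - s/t) * f 0 + s/t * f t) :=
            mul_le_mul_of_nonneg_left this (hq.1 x)
        _ = q x * f 0 + (q x * s) * ((f t - f 0) / t) := by ring
        _ = _ := by rw [hs, h.mul_div]
    calc _ ≤ ∑ x, (q x * f 0 + p x * ((f t - f 0) / t)) := Finset.sum_le_sum fun x _ => this x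
      _ = _ := by
        rw [Finset.sum_add_distrib, ← Finset.sum_mul, ← Finset.sum_mul, hp.2, hq.2]; ring
  have hpos := hstrict 0 t (1 - 1/t) le_rfl one_pos ht1
    (by rw [sub_pos, div_lt_one ht0]; exact ht1) (by simp [ht0]) (by field_simp; ring)
  have hlt : ∑ x, q x * f (p x / q x) < f 0 + f t / (t - 1) := by
    refine lt_of_le_of_lt hb ?_
    have h2 : 0 < t - 1 := by linarith
    have : f 0 + f t / (t - 1) - ((1 - 1/t) * f 0 + 1/t * f t)
      = (1 / (t - 1)) * ((1 - 1/t) * f 0 + (1 - (1 - 1/t)) * f t) := by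
      field_simp; ring
    have h3 := mul_pos (one_div_pos.2 h2) hpos
    linarith
  unfold Dm
  refine lt_of_lt_of_le (EReal.coe_lt_coe_iff.2 hlt) ?_
  rw [EReal.coe_add]
  gcongr
  exact le_iSup (fun t : {t : ℝ // 1 < t} => ((f t.1 / (t.1 - 1) : ℝ) : EReal)) ⟨t, ht1⟩

lemma f_lower {f : ℝ → ℝ} (hf : ConvexOn ℝ (Set.Ici 0) f) (h1 : f 1 = 0)
    (hstrict : ∀ x₁ x₂ lam : ℝ, 0 ≤ x₁ → x₁ < 1 → 1 < x₂ → 0 < lam → lam < 1 →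
      lam * x₁ + (1 - lam) * x₂ = 1 → 0 < lam * f x₁ + (1 - lam) * f x₂)
    {τ : ℝ} (hτ : 0 < τ) (hτ1 : τ < 1) :
    ∃ κ c : ℝ, 0 < κ ∧ ∀ t, 0 ≤ t → c * (t - 1) + κ * (|t - 1| - 2 * τ) ≤ f t := by
  have hm := hstrict (1 - τ) (1 + τ) (1/2) (by linarith) (by linarith) (by linarith)
    (by norm_num) (by norm_num) (by ring)
  -- weighted convexity at 1
  have key : ∀ a b : ℝ, 0 ≤ a → a < 1 → 1 < b → 0 ≤ (b - 1) * f a + (1 - a) * f b := by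
    intro a b ha ha1 hb1
    have hba : 0 < b - a := by linarith
    have := conv2 hf (x := a) (y := b) ha (by simp; linarith) (a := (b-1)/(b-a)) (b := (1-a)/(b-a))
      (div_nonneg (by linarith) hba.le) (div_nonneg (by linarith) hba.le) (by field_simp; ring)
    simp only [smul_eq_mul] at this
    rw [show (b-1)/(b-a) * a + (1-a)/(b-a) * b = 1 by field_simp; ring, h1] at this
    have h2 := mul_nonneg hba.le this
    have e : (b - a) * ((b-1)/(b-a) * f a + (1-a)/(b-a) * f b) = (b - 1) * f a + (1 - a) * f b := by
      field_simp
    linarith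
  have up : ∀ a b : ℝ, 1 < a → a ≤ b → (b - 1) * f a ≤ (a - 1) * f b := by
    intro a b ha hab
    have hb : 0 < b - 1 := by linarith
    have := conv2 hf (x := 1) (y := b) (by simp) (by simp; linarith) (a := (b-a)/(b-1))
      (b := (a-1)/(b-1))
      (div_nonneg (by linarith) hb.le) (div_nonneg (by linarith) hb.le) (by field_simp; ring)
    simp only [smul_eq_mul, h1] at this
    rw [show (b-a)/(b-1) * 1 + (a-1)/(b-1) * b = a by field_simp; ring] at this
    have h2 := mul_le_mul_of_nonneg_left this hb.le
    have e : (b - 1) * ((b-a)/(b-1) * 0 + (a-1)/(b-1) * f b) = (a - 1) * f b := by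
      field_simp; ring
    linarith
  have dn : ∀ a b : ℝ, 0 ≤ b → b ≤ a → a < 1 → (1 - b) * f a ≤ (1 - a) * f b := by
    intro a b hb0 hab ha
    have hb : 0 < 1 - b := by linarith
    have := conv2 hf (x := 1) (y := b) (by simp) hb0 (a := (a-b)/(1-b))
      (b := (1-a)/(1-b))
      (div_nonneg (by linarith) hb.le) (div_nonneg (by linarith) hb.le) (by field_simp; ring)
    simp only [smul_eq_mul, h1] at this
    rw [show (a-b)/(1-b) * 1 + (1-a)/(1-b) * b = a by field_simp; ring] at this
    have h2 := mul_le_mul_of_nonneg_left this hb.le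
    have e : (1 - b) * ((a-b)/(1-b) * 0 + (1-a)/(1-b) * f b) = (1 - a) * f b := by
      field_simp; ring
    linarith
  set m1 := f (1 - τ) with hm1
  set m2 := f (1 + τ) with hm2
  have hmm : 0 < m1 + m2 := by linarith
  refine ⟨(m1 + m2) / (2 * τ), (m2 - m1) / (2 * τ), by positivity, fun t ht => ?_⟩
  rw [← mul_le_mul_iff_right₀ hτ]
  rcases lt_trichotomy t 1 with h | h | h
  · rw [abs_of_neg (by linarith)]
    have e : τ * ((m2 - m1) / (2 * τ) * (t - 1) + (m1 + m2) / (2 * τ) * (-(t - 1) - 2 * τ))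
      = (1 - t) * m1 - τ * (m1 + m2) := by field_simp; ring
    rw [e]
    by_cases hc : t ≤ 1 - τ
    · have := dn (1 - τ) t ht hc (by linarith)
      rw [← hm1] at this
      nlinarith
    · have := key t (1 + τ) ht h (by linarith)
      rw [← hm2] at this
      nlinarith
  · subst h
    have e : τ * ((m2 - m1) / (2 * τ) * (1 - 1) + (m1 + m2) / (2 * τ) * (|1 - 1| - 2 * τ))
      = - τ * (m1 + m2) := by rw [sub_self, abs_zero]; field_simp; ring
    rw [e, h1]
    nlinarith
  · rw [abs_of_pos (by linarith)]
    have e : τ * ((m2 - m1) / (2 * τ) * (t - 1) + (m1 + m2) / (2 * τ) * (t - 1 - 2 * τ))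
      = (t - 1) * m2 - τ * (m1 + m2) := by field_simp; ring
    rw [e]
    by_cases hc : 1 + τ ≤ t
    · have := up (1 + τ) t (by linarith) hc
      rw [← hm2] at this
      nlinarith
    · have := key (1 - τ) t (by linarith) (by linarith) h
      rw [← hm1] at this
      nlinarith

lemma fDiv_far {X : Type*} [Fintype X] {f : ℝ → ℝ} (hf : ConvexOn ℝ (Set.Ici 0) f) (h1 : f 1 = 0)
    (hstrict : ∀ x₁ x₂ lam : ℝ, 0 ≤ x₁ → x₁ < 1 → 1 < x₂ → 0 < lam → lam < 1 →
      lam * x₁ + (1 - lam) * x₂ = 1 → 0 < lam * f x₁ + (1 - lam) * f x₂)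
    {r : X → ℝ} (hr : IsPMF r) {δ : ℝ} (hδ : 0 < δ) :
    ∃ η : ℝ, 0 < η ∧ ∀ s : X → ℝ, IsPMF s → AbsCont r s → δ ≤ dist s r → η ≤ fDiv f r s := by
  have hτ : 0 < min (δ/4) (1/2) := by positivity
  have hτ2 : min (δ/4) (1/2) < 1 := lt_of_le_of_lt (min_le_right _ _) (by norm_num)
  have hτ3 : min (δ/4) (1/2) ≤ δ/4 := min_le_left _ _
  set τ := min (δ/4) (1/2)
  obtain ⟨κ, c, hκ, hb⟩ := f_lower hf h1 hstrict hτ hτ2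
  refine ⟨κ * (δ - 2 * τ), mul_pos hκ (by linarith), fun s hs hac hd => ?_⟩
  rw [fDiv_eq f r s hs.1]
  have hpt : ∀ x, c * (r x - s x) + κ * (|r x - s x| - 2 * τ * s x) ≤ s x * f (r x / s x) := by
    intro x
    have := mul_le_mul_of_nonneg_left (hb (r x / s x) (div_nonneg (hr.1 x) (hs.1 x))) (hs.1 x)
    have e1 : s x * (r x / s x - 1) = r x - s x := by rw [mul_sub, hac.mul_div]; ring
    have e2 : s x * |r x / s x - 1| = |r x - s x| := by
      rw [← e1, abs_mul, abs_of_nonneg (hs.1 x)]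
    calc _ = s x * (c * (r x / s x - 1) + κ * (|r x / s x - 1| - 2 * τ)) := by
          rw [← e2, ← e1]; ring
      _ ≤ _ := this
  have hsum : δ ≤ ∑ x, |r x - s x| := by
    refine hd.trans ((dist_pi_le_iff (Finset.sum_nonneg fun _ _ => abs_nonneg _)).2 fun x => ?_)
    rw [Real.dist_eq, abs_sub_comm]
    exact Finset.single_le_sum (f := fun x => |r x - s x|) (fun _ _ => abs_nonneg _)
      (Finset.mem_univ x)
  have := Finset.sum_le_sum fun x (_ : x ∈ Finset.univ) => hpt x
  rw [Finset.sum_add_distrib, ← Finset.mul_sum, ← Finset.mul_sum, Finset.sum_sub_distrib,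
    Finset.sum_sub_distrib, ← Finset.mul_sum, hr.2, hs.2] at this
  refine le_trans ?_ this
  have := mul_le_mul_of_nonneg_left hsum hκ.le
  linarith

lemma fDiv_cont {X : Type*} [Fintype X] {f : ℝ → ℝ} (hf : ConvexOn ℝ (Set.Ici 0) f)
    {q r : X → ℝ} (hq : IsPMF q) (hr : IsPMF r) (hac : AbsCont q r) :
    ContinuousAt (fun s : X → ℝ => ∑ x, s x * f (q x / s x)) r := by
  refine tendsto_finsetSum _ fun x _ => ?_
  have hev : ContinuousAt (fun s : X → ℝ => s x) r := (continuous_apply x).continuousAt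
  by_cases h0 : q x = 0
  · simp only [h0, zero_div]
    exact hev.mul continuousAt_const
  · have hrx : r x ≠ 0 := fun h => h0 (hac x h)
    have hq0 : 0 < q x := lt_of_le_of_ne (hq.1 x) (Ne.symm h0)
    have hr0 : 0 < r x := lt_of_le_of_ne (hr.1 x) (Ne.symm hrx)
    have hc : ContinuousAt f (q x / r x) := by
      have := hf.continuousOn_interior
      rw [interior_Ici] at this
      exact this.continuousAt (Ioi_mem_nhds (div_pos hq0 hr0))
    have hd : ContinuousAt (fun s : X → ℝ => q x / s x) r := continuousAt_const.div hev hrx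
    exact hev.mul (ContinuousAt.comp (f := fun s : X → ℝ => q x / s x) (g := f) hc hd)

lemma IsPMF.prod {Y Z : Type*} [Fintype Y] [Fintype Z] {p : Y → ℝ} {q : Z → ℝ}
    (hp : IsPMF p) (hq : IsPMF q) : IsPMF (fun a : Y × Z => p a.1 * q a.2) := by
  refine ⟨fun a => mul_nonneg (hp.1 _) (hq.1 _), ?_⟩
  rw [Fintype.sum_prod_type]
  simp only [← Finset.mul_sum, hq.2, mul_one, hp.2]

lemma fDiv_self {X : Type*} [Fintype X] {f : ℝ → ℝ} (h1 : f 1 = 0) (r : X → ℝ) :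
    fDiv f r r = 0 := by
  unfold fDiv
  refine Finset.sum_eq_zero fun x _ => ?_
  split_ifs with h
  · rw [div_self h.ne', h1, mul_zero]
  · rfl

lemma Igf_le {Y : Type*} [Fintype Y] {G f : ℝ → ℝ} (h1 : f 1 = 0) (hG0 : G 0 = 0)
    (hnn : ∀ p q : Y → ℝ, IsPMF p → IsPMF q → AbsCont p q → 0 ≤ G (fDiv f p q))
    {q r : Y → ℝ} (hq : IsPMF q) (hr : IsPMF r) (hac : AbsCont q r) {ε : ℝ}
    (h0 : 0 ≤ ε) (hε1 : ε ≤ 1) :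
    Igf G f (fun b : Bool => if b then ε else 1 - ε) (fun b : Bool => if b then q else r)
      ≤ ε * G (fDiv f q r) := by
  unfold Igf
  refine csInf_le ⟨0, ?_⟩ ⟨r, hr, ?_, ?_⟩
  · rintro v ⟨s, hs, ha, rfl⟩
    have ht := ha true
    have hf := ha false
    simp only [if_true, Bool.false_eq_true, if_false] at ht hf
    simp only [Fintype.sum_bool, if_true, Bool.false_eq_true, if_false]
    exact add_nonneg (mul_nonneg h0 (hnn _ _ hq hs ht))
      (mul_nonneg (by linarith) (hnn _ _ hr hs hf))
  · intro b
    cases b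
    · intro x hx; simpa using hx
    · simpa using hac
  · simp [fDiv_self h1, hG0]

/-- Converse direction: if `(G,f)` is an admissible pair with `G` continuous and
positive on the interior of its domain `[0, D_m(f))`, and `f` is strictly convex
at `1`, then information-subadditivity implies divergence-subadditivity. -/
theorem infoSubadditive_implies_divSubadditive (G f : ℝ → ℝ)
    (hGf : Admissible G f)
    (hGcont : ContinuousOn G {x : ℝ | 0 ≤ x ∧ (x : EReal) < Dm f})
    (hGpos : ∀ x : ℝ, 0 < x → (x : EReal) < Dm f → 0 < G x)
    (hstrict : ∀ x₁ x₂ lam : ℝ, 0 ≤ x₁ → x₁ < 1 → 1 < x₂ → 0 < lam → lam < 1 →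
      lam * x₁ + (1 - lam) * x₂ = 1 → 0 < lam * f x₁ + (1 - lam) * f x₂)
    (h : InfoSubadditive G f) :
    DivSubadditive G f := by
  intro Y Z _ _ qY rY qZ rZ hqY hrY hqZ hrZ haY haZ
  obtain ⟨hf, h1, hG0, hmono, hGnn⟩ := hGf
  have hnn : ∀ {X : Type} [Fintype X] (p q : X → ℝ), IsPMF p → IsPMF q → AbsCont p q →
      0 ≤ G (fDiv f p q) := fun p q hp hq ha =>
    hGnn _ (fDiv_nonneg_aux hf h1 hp hq ha) (fDiv_lt_Dm hf hstrict hp hq ha)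
  have hq := hqY.prod hqZ
  have hr := hrY.prod hrZ
  have hac : AbsCont (fun p : Y × Z => qY p.1 * qZ p.2) (fun p : Y × Z => rY p.1 * rZ p.2) := by
    intro p hp
    rcases mul_eq_zero.1 hp with h | h
    · simp [haY _ h]
    · simp [haZ _ h]
  by_contra! hlt
  have hC0 : 0 ≤ G (fDiv f qY rY) + G (fDiv f qZ rZ) :=
    add_nonneg (hnn _ _ hqY hrY haY) (hnn _ _ hqZ hrZ haZ)
  obtain ⟨B, hCB, hBA⟩ := exists_between hlt
  have hB0 : 0 < B := by linarith
  set q : Y × Z → ℝ := fun p => qY p.1 * qZ p.2 with hqdef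
  set r : Y × Z → ℝ := fun p => rY p.1 * rZ p.2 with hrdef
  -- near `r`
  obtain ⟨δ, hδ, hnear⟩ : ∃ δ > 0, ∀ s, IsPMF s → AbsCont q s → dist s r < δ →
      B < G (fDiv f q s) := by
    set S : Set (Y × Z → ℝ) := {s | IsPMF s ∧ AbsCont q s} with hS
    have hcw : ContinuousWithinAt (fun s => G (∑ x, s x * f (q x / s x))) S r := by
      refine ContinuousWithinAt.comp (g := G) (t := {x : ℝ | 0 ≤ x ∧ (x : EReal) < Dm f})
        (hGcont _ ?_) (fDiv_cont hf hq hr hac).continuousWithinAt ?_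
      · rw [← fDiv_eq f q r hr.1]
        exact ⟨fDiv_nonneg_aux hf h1 hq hr hac, fDiv_lt_Dm hf hstrict hq hr hac⟩
      · rintro s ⟨hs, ha⟩
        simp only
        rw [← fDiv_eq f q s hs.1]
        exact ⟨fDiv_nonneg_aux hf h1 hq hs ha, fDiv_lt_Dm hf hstrict hq hs ha⟩
    have hBA' : B < G (∑ x, r x * f (q x / r x)) := by rwa [← fDiv_eq f q r hr.1]
    have hev := hcw.eventually_const_lt hBA'
    obtain ⟨δ, hδ, hsub⟩ := Metric.mem_nhdsWithin_iff.1 hev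
    refine ⟨δ, hδ, fun s hs ha hd => ?_⟩
    have := hsub ⟨Metric.mem_ball.2 hd, hs, ha⟩
    rw [fDiv_eq f q s hs.1]
    exact this
  -- far from `r`
  obtain ⟨η₀, hη₀, hfar⟩ := fDiv_far hf h1 hstrict hr hδ
  have hDm : ((0 : ℝ) : EReal) < Dm f := by
    have := fDiv_lt_Dm hf hstrict hr hr (fun _ h => h)
    rwa [fDiv_self h1] at this
  obtain ⟨η₁, hη₁, hη₁D⟩ := EReal.lt_iff_exists_real_btwn.1 hDm
  have hη₁ : 0 < η₁ := by exact_mod_cast hη₁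
  have hη : 0 < min η₀ η₁ := lt_min hη₀ hη₁
  set η := min η₀ η₁ with hηdef
  have hηD : (η : EReal) < Dm f :=
    lt_of_le_of_lt (EReal.coe_le_coe_iff.2 (min_le_right _ _)) hη₁D
  have hg := hGpos η hη hηD
  set g := G η with hgdef
  have hgB : 0 < g + B := by linarith
  set ε := g / (g + B) with hεdef
  have hε0 : 0 < ε := div_pos hg hgB
  have hε1 : ε < 1 := (div_lt_one hgB).2 (by linarith)
  have hεe : (1 - ε) * g = ε * B := by rw [hεdef]; field_simp; ring
  have hmain := h Bool Y Z (fun b => if b then ε else 1 - ε) (fun b => if b then qY else rY)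
    (fun b => if b then qZ else rZ)
    ⟨fun b => by cases b <;> simp <;> linarith, by simp⟩
    (fun b => by cases b <;> simpa) (fun b => by cases b <;> simpa)
  have hY := Igf_le h1 hG0 hnn hqY hrY haY hε0.le hε1.le
  have hZ := Igf_le h1 hG0 hnn hqZ hrZ haZ hε0.le hε1.le
  have hlow : ε * B ≤ Igf G f (fun b : Bool => if b then ε else 1 - ε)
      (fun b (p : Y × Z) => (if b then qY else rY) p.1 * (if b then qZ else rZ) p.2) := by
    unfold Igf
    refine le_csInf ⟨_, r, hr, ?_, rfl⟩ ?_
    · intro b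
      cases b
      · intro x hx; exact hx
      · exact hac
    · rintro v ⟨s, hs, ha, rfl⟩
      have ht : AbsCont q s := by simpa using ha true
      have hfl : AbsCont r s := by simpa using ha false
      simp only [Fintype.sum_bool, if_true, Bool.false_eq_true, if_false]
      change ε * B ≤ ε * G (fDiv f q s) + (1 - ε) * G (fDiv f r s)
      have n1 := mul_nonneg hε0.le (hnn _ _ hq hs ht)
      have n2 := mul_nonneg (sub_nonneg.2 hε1.le) (hnn _ _ hr hs hfl)
      rcases lt_or_ge (dist s r) δ with hd | hd
      · have := mul_le_mul_of_nonneg_left (hnear s hs ht hd).le hε0.le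
        linarith
      · have h3 : g ≤ G (fDiv f r s) := hmono _ _ hη.le
          ((min_le_left _ _).trans (hfar s hs hfl hd)) (fDiv_lt_Dm hf hstrict hr hs hfl)
        have := mul_le_mul_of_nonneg_left h3 (sub_nonneg.2 hε1.le)
        linarith
  have h5 := mul_lt_mul_of_pos_left hCB hε0
  linarith
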